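/- Let q ≥ 2 and let x ∈ ℝ^d with ‖x‖ = 1. If W is a (q−1)×d random matrix with i.i.d. standard Gaussian entries, then for every u ∈ ℝ^d, E_W ⟨s_{Q_W(x)}, W u⟩ = λ(q) ⟨x, u⟩. -/

import Mathlib

open MeasureTheory ProbabilityTheory
open scoped RealInnerProductSpace ENNReal Pointwise

/-- The standard Gaussian measure on `EuclideanSpace ℝ (Fin n)`. -/
noncomputable def stdGaussian (n : ℕ) : Measure (EuclideanSpace ℝ (Fin n)) :=
  (Measure.pi fun _ : Fin n => gaussianReal 0 1).map
    (EuclideanSpace.equiv (Fin n) ℝ).symm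

/-- The law of an `n × d` random matrix with i.i.d. standard Gaussian entries. -/
noncomputable def stdGaussianMatrix (n d : ℕ) : Measure (Fin n → Fin d → ℝ) :=
  Measure.pi fun _ : Fin n => Measure.pi fun _ : Fin d => gaussianReal 0 1

/-- Action of a matrix (given as `Fin n → Fin d → ℝ`) on a vector of `EuclideanSpace ℝ (Fin d)`,
producing a vector in `EuclideanSpace ℝ (Fin n)`. -/
noncomputable def act {n d : ℕ} (W : Fin n → Fin d → ℝ) (x : EuclideanSpace ℝ (Fin d)) :
    EuclideanSpace ℝ (Fin n) :=
  (EuclideanSpace.equiv (Fin n) ℝ).symm (fun k => ∑ j, W k j * x j)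

/-- A simplex coding: `q` unit vectors in `ℝ^{q-1}` with pairwise inner products `-1/(q-1)`
summing to zero. -/
def IsSimplexCoding {q : ℕ} (s : Fin q → EuclideanSpace ℝ (Fin (q - 1))) : Prop :=
  (∀ j, ‖s j‖ = 1) ∧ (∀ i j, i ≠ j → ⟪s i, s j⟫ = -(1 / ((q : ℝ) - 1))) ∧ (∑ j, s j = 0)

/-- The Gaussian mean width of a set `K ⊆ ℝ^d`. -/
noncomputable def meanWidth {d : ℕ} (K : Set (EuclideanSpace ℝ (Fin d))) : ℝ :=
  ∫ g, sSup ((fun z => ⟪g, z⟫) '' (K - K)) ∂(stdGaussian d)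

/-- `λ(q) = E max_j ⟨s_j, g⟩` for a standard Gaussian `g` in `ℝ^{q-1}`. -/
noncomputable def lambdaQ {q : ℕ} (s : Fin q → EuclideanSpace ℝ (Fin (q - 1))) : ℝ :=
  ∫ g, (⨆ j, ⟪s j, g⟫) ∂(stdGaussian (q - 1))

/-!
The vector `s_{Q_W(x)}` is a subgradient of the convex function `v ↦ max_j ⟨s_j, v⟩` at `W x`.
Averaging over `W`, the linear form `u ↦ E ⟨s_{Q_W(x)}, W u⟩` is a subgradient at `x` of
`y ↦ E max_j ⟨s_j, W y⟩`, which equals `λ ‖y‖` because `W y` has the law of `‖y‖ g`. Away from the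
origin the norm is differentiable with gradient `x / ‖x‖`, so that subgradient is
`u ↦ λ ⟨x, u⟩ / ‖x‖`.
-/

section NormSubgradient

variable {E : Type*} [NormedAddCommGroup E] [InnerProductSpace ℝ E] {x : E}

lemma hasDerivAt_norm_add_smul (hx : x ≠ 0) (u : E) :
    HasDerivAt (fun t : ℝ => ‖x + t • u‖) (⟪x, u⟫ / ‖x‖) 0 := by
  have hline : HasDerivAt (fun t : ℝ => x + t • u) u 0 := by
    simpa using ((hasDerivAt_id (0 : ℝ)).smul_const u).const_add x
  have hsqrt := hline.norm_sq.sqrt (by simpa using hx)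
  simpa [Real.sqrt_sq, mul_div_mul_left] using hsqrt

lemma eq_mul_inner_div_norm_of_forall_add_mul_le (hx : x ≠ 0) {u : E} {c a : ℝ}
    (h : ∀ t : ℝ, c * ‖x‖ + t * a ≤ c * ‖x + t • u‖) : a = c * (⟪x, u⟫ / ‖x‖) := by
  have hderiv : HasDerivAt (fun t : ℝ => c * ‖x + t • u‖ - t * a)
      (c * (⟪x, u⟫ / ‖x‖) - 1 * a) 0 :=
    ((hasDerivAt_norm_add_smul hx u).const_mul c).sub ((hasDerivAt_id 0).mul_const a)
  have hmin : IsLocalMin (fun t : ℝ => c * ‖x + t • u‖ - t * a) 0 :=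
    .of_forall fun t => by simpa [le_sub_iff_add_le] using h t
  linarith [hmin.hasDerivAt_eq_zero hderiv]

end NormSubgradient

section MaxInner

variable {ι E : Type*} [NormedAddCommGroup E] [InnerProductSpace ℝ E]

/-- The support function `v ↦ max_j ⟨s_j, v⟩` of a family of vectors. Being a supremum of reals, it
is `0` for an empty family and wherever the inner products are unbounded above. -/
noncomputable def maxInner (s : ι → E) (v : E) : ℝ := ⨆ j, ⟪s j, v⟫

lemma maxInner_smul_of_nonneg (s : ι → E) {r : ℝ} (hr : 0 ≤ r) (v : E) :
    maxInner s (r • v) = r * maxInner s v := by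
  simp_rw [maxInner, real_inner_smul_right, Real.mul_iSup_of_nonneg hr]

lemma measurable_maxInner [Countable ι] [MeasurableSpace E] [BorelSpace E]
    [SecondCountableTopology E] (s : ι → E) : Measurable (maxInner s) :=
  Measurable.iSup fun j => by fun_prop

variable [Finite ι] (s : ι → E)

lemma inner_le_maxInner (j : ι) (v : E) : ⟪s j, v⟫ ≤ maxInner s v :=
  le_ciSup (f := fun j => ⟪s j, v⟫) (Set.finite_range _).bddAbove j

lemma abs_inner_le_iSup_norm_mul (j : ι) (v : E) : |⟪s j, v⟫| ≤ (⨆ i, ‖s i‖) * ‖v‖ :=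
  (abs_real_inner_le_norm _ _).trans <| by
    gcongr
    exact le_ciSup (f := fun i => ‖s i‖) (Set.finite_range _).bddAbove j

lemma abs_maxInner_le_iSup_norm_mul (v : E) : |maxInner s v| ≤ (⨆ i, ‖s i‖) * ‖v‖ := by
  cases isEmpty_or_nonempty ι
  · simp [maxInner]
  · obtain ⟨j, hj⟩ := exists_eq_ciSup_of_finite (f := fun j => ⟪s j, v⟫)
    rw [maxInner, ← hj]
    exact abs_inner_le_iSup_norm_mul s j v

variable {Ω : Type*} [MeasurableSpace Ω] {μ : Measure Ω} {X Y : Ω → E} {Q : Ω → ι} {s}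

lemma integrable_inner_comp (hQ : AEStronglyMeasurable (fun ω => s (Q ω)) μ)
    (hX : Integrable X μ) : Integrable (fun ω => ⟪s (Q ω), X ω⟫) μ :=
  (hX.norm.const_mul _).mono' (hQ.inner hX.aestronglyMeasurable)
    (ae_of_all _ fun _ => abs_inner_le_iSup_norm_mul s _ _)

variable [MeasurableSpace E] [BorelSpace E] [SecondCountableTopology E]

lemma integrable_maxInner_comp (hX : Integrable X μ) :
    Integrable (fun ω => maxInner s (X ω)) μ :=
  (hX.norm.const_mul _).mono'
    ((measurable_maxInner s).comp_aemeasurable hX.aemeasurable).aestronglyMeasurable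
    (ae_of_all _ fun _ => abs_maxInner_le_iSup_norm_mul s _)

lemma integral_maxInner_add_integral_inner_le
    (hQ : AEStronglyMeasurable (fun ω => s (Q ω)) μ) (hX : Integrable X μ) (hY : Integrable Y μ)
    (hmax : ∀ᵐ ω ∂μ, ∀ j, ⟪s j, X ω⟫ ≤ ⟪s (Q ω), X ω⟫) :
    ∫ ω, maxInner s (X ω) ∂μ + ∫ ω, ⟪s (Q ω), Y ω⟫ ∂μ ≤ ∫ ω, maxInner s (X ω + Y ω) ∂μ := by
  rw [← integral_add (integrable_maxInner_comp hX) (integrable_inner_comp hQ hY)]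
  refine integral_mono_ae ((integrable_maxInner_comp hX).add (integrable_inner_comp hQ hY))
    (integrable_maxInner_comp (hX.add hY)) ?_
  filter_upwards [hmax] with ω hω
  have : Nonempty ι := ⟨Q ω⟩
  calc maxInner s (X ω) + ⟪s (Q ω), Y ω⟫
      ≤ ⟪s (Q ω), X ω⟫ + ⟪s (Q ω), Y ω⟫ := by gcongr; exact ciSup_le hω
    _ = ⟪s (Q ω), X ω + Y ω⟫ := (inner_add_right _ _ _).symm
    _ ≤ maxInner s (X ω + Y ω) := inner_le_maxInner s _ _

end MaxInner

section GaussianMatrix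

lemma map_pi_gaussianReal_sum_mul {ι : Type*} [Fintype ι] (y : EuclideanSpace ℝ ι) :
    (Measure.pi fun _ : ι => gaussianReal 0 1).map (fun w => ∑ j, w j * y j)
      = gaussianReal 0 (‖y‖₊ ^ 2) := by
  have hinner : (fun w : ι → ℝ => ∑ j, w j * y j) = innerSL ℝ y ∘ WithLp.toLp 2 := by
    ext w
    simp [PiLp.inner_apply]
  rw [hinner, ← Measure.map_map (by fun_prop) (by fun_prop), map_pi_eq_stdGaussian,
    IsGaussian.map_eq_gaussianReal, integral_strongDual_stdGaussian, variance_dual_stdGaussian,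
    innerSL_apply_norm, ← coe_nnnorm, ← NNReal.coe_pow, Real.toNNReal_coe]

lemma map_pi_gaussianReal_const_mul {ι : Type*} [Fintype ι] (r : ℝ) :
    (Measure.pi fun _ : ι => gaussianReal 0 1).map (fun g k => r * g k)
      = Measure.pi fun _ : ι => gaussianReal 0 (‖r‖₊ ^ 2) := by
  have hscale : (gaussianReal 0 1).map (r * ·) = gaussianReal 0 (‖r‖₊ ^ 2) := by
    rw [gaussianReal_map_const_mul, mul_zero, mul_one]
    congr 1
    ext
    simp
  exact (measurePreserving_pi _ _ fun _ => ⟨by fun_prop, hscale⟩).map_eq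

variable {n d : ℕ} (x y : EuclideanSpace ℝ (Fin d))

lemma act_add (W : Fin n → Fin d → ℝ) : act W (x + y) = act W x + act W y := by
  ext k
  simp [act, mul_add, Finset.sum_add_distrib]

lemma act_smul (W : Fin n → Fin d → ℝ) (t : ℝ) : act W (t • y) = t • act W y := by
  ext k
  simp [act, Finset.mul_sum, mul_left_comm]

@[fun_prop]
lemma measurable_act : Measurable (fun W : Fin n → Fin d → ℝ => act W y) :=
  (EuclideanSpace.equiv (Fin n) ℝ).symm.continuous.measurable.comp (by fun_prop)

lemma map_sum_mul_stdGaussianMatrix :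
    (stdGaussianMatrix n d).map (fun W k => ∑ j, W k j * y j)
      = Measure.pi fun _ => gaussianReal 0 (‖y‖₊ ^ 2) :=
  (measurePreserving_pi _ _ fun _ => ⟨by fun_prop, map_pi_gaussianReal_sum_mul y⟩).map_eq

lemma map_act_stdGaussianMatrix :
    (stdGaussianMatrix n d).map (fun W => act W y) = (stdGaussian n).map (fun g => ‖y‖ • g) := by
  let e := (EuclideanSpace.equiv (Fin n) ℝ).symm
  have he : Measurable e := e.continuous.measurable
  calc (stdGaussianMatrix n d).map (fun W => act W y)
      = (Measure.pi fun _ => gaussianReal 0 (‖y‖₊ ^ 2)).map e := by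
        rw [← map_sum_mul_stdGaussianMatrix y, Measure.map_map he (by fun_prop)]
        rfl
    _ = (stdGaussian n).map (fun g => ‖y‖ • g) := by
        rw [← nnnorm_norm y, ← map_pi_gaussianReal_const_mul, Measure.map_map he (by fun_prop),
          _root_.stdGaussian, Measure.map_map (by fun_prop) he]
        rfl

lemma integrable_id_stdGaussian :
    Integrable (fun g : EuclideanSpace ℝ (Fin n) => g) (stdGaussian n) := by
  have hstd : stdGaussian n = ProbabilityTheory.stdGaussian (EuclideanSpace ℝ (Fin n)) :=
    map_pi_eq_stdGaussian
  rw [hstd]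
  exact IsGaussian.integrable_fun_id

lemma integrable_act : Integrable (fun W => act W y) (stdGaussianMatrix n d) := by
  have hlaw : Integrable id ((stdGaussianMatrix n d).map fun W => act W y) := by
    rw [map_act_stdGaussianMatrix, integrable_map_measure (by fun_prop) (by fun_prop)]
    exact integrable_id_stdGaussian.smul ‖y‖
  exact hlaw.comp_measurable (measurable_act y)

lemma integral_maxInner_act {ι : Type*} [Finite ι] (s : ι → EuclideanSpace ℝ (Fin n)) :
    ∫ W, maxInner s (act W y) ∂(stdGaussianMatrix n d)
      = (∫ g, maxInner s g ∂(stdGaussian n)) * ‖y‖ := by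
  have hs {ν : Measure (EuclideanSpace ℝ (Fin n))} : AEStronglyMeasurable (maxInner s) ν :=
    (measurable_maxInner s).aestronglyMeasurable
  calc ∫ W, maxInner s (act W y) ∂(stdGaussianMatrix n d)
      = ∫ g, maxInner s (‖y‖ • g) ∂(stdGaussian n) := by
        rw [← integral_map (by fun_prop) hs, map_act_stdGaussianMatrix,
          integral_map (by fun_prop) hs]
    _ = (∫ g, maxInner s g ∂(stdGaussian n)) * ‖y‖ := by
        simp_rw [maxInner_smul_of_nonneg s (norm_nonneg y), integral_const_mul, mul_comm]

end GaussianMatrix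

theorem qary_expected_objective_general
    {ι : Type*} [Finite ι] {n d : ℕ} (s : ι → EuclideanSpace ℝ (Fin n))
    {x : EuclideanSpace ℝ (Fin d)} (hx : x ≠ 0) (Q : (Fin n → Fin d → ℝ) → ι)
    (hQmeas : AEStronglyMeasurable (fun W => s (Q W)) (stdGaussianMatrix n d))
    (hQ : ∀ᵐ W ∂(stdGaussianMatrix n d), ∀ j, ⟪s j, act W x⟫ ≤ ⟪s (Q W), act W x⟫)
    (u : EuclideanSpace ℝ (Fin d)) :
    ∫ W, ⟪s (Q W), act W u⟫ ∂(stdGaussianMatrix n d)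
      = (∫ g, maxInner s g ∂(stdGaussian n)) * (⟪x, u⟫ / ‖x‖) := by
  refine eq_mul_inner_div_norm_of_forall_add_mul_le hx fun t => ?_
  have hsub := integral_maxInner_add_integral_inner_le hQmeas (integrable_act x)
    (integrable_act (t • u)) hQ
  simp_rw [← act_add, integral_maxInner_act, act_smul, real_inner_smul_right,
    integral_const_mul] at hsub
  exact hsub

/-- For `‖x‖ = 1` and a Gaussian random matrix `W`,
`E_W ⟪s (Q_W x), W u⟫ = λ(q) ⟪x, u⟫` for every `u`. -/
theorem qary_expected_objective
    (q d : ℕ) (hq : 2 ≤ q)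
    (s : Fin q → EuclideanSpace ℝ (Fin (q - 1))) (hs : IsSimplexCoding s)
    (x : EuclideanSpace ℝ (Fin d)) (hx : ‖x‖ = 1)
    (Q : (Fin (q - 1) → Fin d → ℝ) → Fin q) (hQmeas : Measurable Q)
    (hQ : ∀ W j, ⟪s j, act W x⟫ ≤ ⟪s (Q W), act W x⟫)
    (u : EuclideanSpace ℝ (Fin d)) :
    ∫ W, ⟪s (Q W), act W u⟫ ∂(stdGaussianMatrix (q - 1) d) = lambdaQ s * ⟪x, u⟫ := by
  have hx0 : x ≠ 0 := norm_ne_zero_iff.mp (by simp [hx])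
  have hsQ : Measurable fun W => s (Q W) := (measurable_of_countable s).comp hQmeas
  have h := qary_expected_objective_general s hx0 Q hsQ.aestronglyMeasurable (ae_of_all _ hQ) u
  rwa [hx, div_one] at h
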